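/- For every real t with |t| < 1, Σ_{n=0}^{∞} C_{n+1}·𝓐_{n+1}(0)·(−t)^n = −(5/12)·F(11/12, 17/12; 3; t), where C_m = (1/(m+1))·binom(2m, m) is the m-th Catalan number. -/

import Mathlib

noncomputable section

/-- Rising factorial (Pochhammer symbol) `(a)_n = a(a+1)⋯(a+n-1)`. -/
def poch (a : ℝ) (n : ℕ) : ℝ := ∏ i ∈ Finset.range n, (a + (i : ℝ))

/-- The rescaled Atkin polynomials `𝓐_n`. -/
def Atkin : ℕ → ℝ → ℝ
  | 0, _ => 1
  | 1, x => x - 5/12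
  | 2, x => x^2 - (205/216) * x + 935/10368
  | n + 3, x =>
      (x - 2 * (((n : ℝ) + 2)^2 - 29/144) / (4 * ((n : ℝ) + 2)^2 - 1)) * Atkin (n + 2) x
      - ((((n : ℝ) + 2) - 13/12) * (((n : ℝ) + 2) - 7/12) * (((n : ℝ) + 2) - 5/12)
          * (((n : ℝ) + 2) + 1/12)
         / (2 * ((n : ℝ) + 2) * (2 * ((n : ℝ) + 2) - 1)^2 * (2 * ((n : ℝ) + 2) - 2)))
        * Atkin (n + 1) x

/-- The Gauss hypergeometric series `F(a,b;c;x) = Σ_{k≥0} (a)_k (b)_k / ((c)_k k!) xᵏ`. -/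
def hyp (a b c x : ℝ) : ℝ :=
  ∑' k : ℕ, poch a k * poch b k / (poch c k * (Nat.factorial k : ℝ)) * x ^ k

/-!
At `x = 0` the three-term recurrence has the form
`𝓐_{n+3} = (r_{n+1} + s_n) 𝓐_{n+2} - r_n s_n 𝓐_{n+1}`, that is,
`𝓐_{n+3} - r_{n+1} 𝓐_{n+2} = s_n (𝓐_{n+2} - r_n 𝓐_{n+1})`, with explicit rational functions
`r` and `s` of the index. The right-hand side vanishes for `n = 0`, so `𝓐_{n+2}(0) = r_n 𝓐_{n+1}(0)`
for all `n`, and multiplying `-r_n` by the ratio of consecutive Catalan numbers gives the term ratio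
of `F(11/12, 17/12; 3; t)`. As `3 - 11/12 - 17/12 > 0`, Kummer's test with the weights `c + k - 1`
shows that this series converges on the closed interval `[-1, 1]`.
-/

theorem summable_of_eventually_le_sub_succ {u v : ℕ → ℝ} (hu : ∀ᶠ n in Filter.atTop, 0 ≤ u n)
    (hv : ∀ᶠ n in Filter.atTop, 0 ≤ v n) (huv : ∀ᶠ n in Filter.atTop, u n ≤ v n - v (n + 1)) :
    Summable u := by
  obtain ⟨N, hN⟩ := Filter.eventually_atTop.1 (hu.and (hv.and huv))
  rw [← summable_nat_add_iff N]
  refine summable_of_sum_range_le (c := v N) (fun n => (hN _ (by lia)).1) fun n => ?_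
  calc ∑ i ∈ Finset.range n, u (i + N)
      ≤ ∑ i ∈ Finset.range n, (v (i + N) - v (i + 1 + N)) := by
        gcongr with i
        rw [add_right_comm]
        exact (hN _ (by lia)).2.2
    _ = v N - v (n + N) := by
        rw [Finset.sum_range_sub' fun i => v (i + N), zero_add]
    _ ≤ v N := sub_le_self _ (hN _ (by lia)).2.1

theorem poch_succ (a : ℝ) (n : ℕ) : poch a (n + 1) = poch a n * (a + n) :=
  Finset.prod_range_succ _ _

/-- The coefficient `(a)_k (b)_k / ((c)_k k!)` of `x ^ k` in the Gauss series `hyp a b c x`. -/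
def hypCoeff (a b c : ℝ) (k : ℕ) : ℝ :=
  poch a k * poch b k / (poch c k * (Nat.factorial k : ℝ))

theorem hypCoeff_zero (a b c : ℝ) : hypCoeff a b c 0 = 1 := by
  simp [hypCoeff, poch]

theorem hypCoeff_succ (a b c : ℝ) (k : ℕ) :
    hypCoeff a b c (k + 1) = (a + k) * (b + k) / ((c + k) * (k + 1)) * hypCoeff a b c k := by
  simp only [hypCoeff, poch_succ, Nat.factorial_succ, Nat.cast_mul, Nat.cast_succ]
  rw [div_mul_div_comm]
  congr 1 <;> ring

theorem add_mul_abs_hypCoeff_succ {a b c : ℝ} {k : ℕ} (ha : 0 ≤ a + k) (hb : 0 ≤ b + k)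
    (hc : 0 < c + k) :
    (c + k) * |hypCoeff a b c (k + 1)| = (a + k) * (b + k) / (k + 1) * |hypCoeff a b c k| := by
  have hratio : 0 ≤ (a + k) * (b + k) / ((c + k) * (k + 1)) := by positivity
  rw [hypCoeff_succ, abs_mul, abs_of_nonneg hratio]
  field_simp

theorem summable_abs_hypCoeff {a b c : ℝ} (h : a + b < c) :
    Summable fun k => |hypCoeff a b c k| := by
  have eventually_ge (x : ℝ) : ∀ᶠ k : ℕ in Filter.atTop, x ≤ k :=
    tendsto_natCast_atTop_atTop.eventually_ge_atTop x
  set ε := (c - a - b) / 2 with hε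
  have hε_pos : 0 < ε := by linarith
  rw [← summable_mul_left_iff hε_pos.ne']
  refine summable_of_eventually_le_sub_succ (v := fun k => (c + k - 1) * |hypCoeff a b c k|)
    (.of_forall fun k => by positivity) ?_ ?_
  · filter_upwards [eventually_ge (1 - c)] with k hk
    exact mul_nonneg (by linarith) (abs_nonneg _)
  · filter_upwards [eventually_ge (-a), eventually_ge (-b), eventually_ge (1 - c),
      eventually_ge ((a * b + 1 + ε - c) / ε)] with k ha hb hc hk
    have weight_gap : (a + k) * (b + k) / (k + 1) ≤ c + k - 1 - ε := by
      rw [div_le_iff₀ hε_pos] at hk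
      rw [div_le_iff₀ (by positivity)]
      linear_combination hk + 2 * k * hε
    calc ε * |hypCoeff a b c k|
        ≤ (c + k - 1 - (a + k) * (b + k) / (k + 1)) * |hypCoeff a b c k| := by
          gcongr
          linarith
      _ = (c + k - 1) * |hypCoeff a b c k| - (c + (k + 1 : ℕ) - 1) * |hypCoeff a b c (k + 1)| := by
          rw [sub_mul, ← add_mul_abs_hypCoeff_succ (by linarith) (by linarith) (by linarith)]
          push_cast
          ring

theorem hasSum_hyp {a b c t : ℝ} (h : a + b < c) (ht : |t| ≤ 1) :
    HasSum (fun k => hypCoeff a b c k * t ^ k) (hyp a b c t) := by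
  refine ((summable_abs_hypCoeff h).of_norm_bounded fun k => ?_).hasSum
  rw [Real.norm_eq_abs, abs_mul, abs_pow]
  exact mul_le_of_le_one_right (abs_nonneg _) (pow_le_one₀ (abs_nonneg t) ht)

theorem add_two_mul_catalan_succ (n : ℕ) :
    (n + 2) * catalan (n + 1) = 2 * (2 * n + 1) * catalan n := by
  refine Nat.eq_of_mul_eq_mul_left n.succ_pos ?_
  calc (n + 1) * ((n + 2) * catalan (n + 1))
      = (n + 1) * (n + 1).centralBinom := by rw [← succ_mul_catalan_eq_centralBinom]
    _ = 2 * (2 * n + 1) * n.centralBinom := Nat.succ_mul_centralBinom_succ n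
    _ = (n + 1) * (2 * (2 * n + 1) * catalan n) := by
        rw [← succ_mul_catalan_eq_centralBinom]
        ring

theorem cast_catalan_succ (n : ℕ) :
    (catalan (n + 1) : ℝ) = 2 * (2 * n + 1) / (n + 2) * catalan n := by
  rw [div_mul_eq_mul_div, eq_div_iff (by positivity), mul_comm]
  exact_mod_cast add_two_mul_catalan_succ n

theorem cast_catalan_eq_choose_div (n : ℕ) :
    (catalan n : ℝ) = (Nat.choose (2 * n) n : ℝ) / (n + 1) := by
  rw [eq_div_iff (by positivity), mul_comm]
  exact_mod_cast succ_mul_catalan_eq_centralBinom n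

/-- The ratio `r_n = 𝓐_{n+2}(0) / 𝓐_{n+1}(0)`, one of the two factors into which the three-term
recurrence splits at `x = 0`. -/
def atkinRatio (n : ℕ) : ℝ :=
  -((n + 11 / 12) * (n + 17 / 12) / (2 * (n + 1) * (2 * n + 3)))

/-- The complementary factor `s_n` of the three-term recurrence at `x = 0`: the coefficient of
`𝓐_{n+2}(0)` is `r_{n+1} + s_n` and that of `𝓐_{n+1}(0)` is `-r_n s_n`. -/
def atkinCoratio (n : ℕ) : ℝ :=
  -((n + 19 / 12) * (n + 25 / 12) / (2 * (n + 2) * (2 * n + 3)))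

theorem Atkin_add_three_zero (n : ℕ) :
    Atkin (n + 3) 0 = (atkinRatio (n + 1) + atkinCoratio n) * Atkin (n + 2) 0
      - atkinRatio n * atkinCoratio n * Atkin (n + 1) 0 := by
  have sum_eq : 0 - 2 * (((n : ℝ) + 2) ^ 2 - 29 / 144) / (4 * ((n : ℝ) + 2) ^ 2 - 1)
      = atkinRatio (n + 1) + atkinCoratio n := by
    have factor : 4 * ((n : ℝ) + 2) ^ 2 - 1 = (2 * n + 3) * (2 * n + 5) := by ring
    have shift : 2 * ((n : ℝ) + 1 + 1) * (2 * (n + 1) + 3) = 2 * (n + 2) * (2 * n + 5) := by ring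
    simp only [atkinRatio, atkinCoratio, Nat.cast_succ]
    rw [factor, shift]
    field_simp
    ring
  have prod_eq : ((n : ℝ) + 2 - 13 / 12) * (n + 2 - 7 / 12) * (n + 2 - 5 / 12) * (n + 2 + 1 / 12)
      / (2 * (n + 2) * (2 * (n + 2) - 1) ^ 2 * (2 * (n + 2) - 2))
      = atkinRatio n * atkinCoratio n := by
    rw [atkinRatio, atkinCoratio, neg_mul_neg, div_mul_div_comm]
    congr 1 <;> ring
  rw [Atkin, sum_eq, prod_eq]

theorem Atkin_add_two_zero (n : ℕ) :
    Atkin (n + 2) 0 = atkinRatio n * Atkin (n + 1) 0 := by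
  induction n with
  | zero => norm_num [Atkin, atkinRatio]
  | succ n ih => linear_combination Atkin_add_three_zero n + atkinCoratio n * ih

theorem catalan_mul_Atkin_zero (n : ℕ) :
    catalan (n + 1) * Atkin (n + 1) 0 * (-1) ^ n
      = -(5 / 12) * hypCoeff (11 / 12) (17 / 12) 3 n := by
  induction n with
  | zero => norm_num [Atkin, hypCoeff_zero]
  | succ n ih =>
    have ratio_eq : 2 * (2 * ((n + 1 : ℕ) : ℝ) + 1) / ((n + 1 : ℕ) + 2) * -atkinRatio n
        = (11 / 12 + n) * (17 / 12 + n) / ((3 + n) * (n + 1)) := by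
      rw [atkinRatio, neg_neg, div_mul_div_comm, div_eq_div_iff (by positivity) (by positivity)]
      push_cast
      ring
    rw [cast_catalan_succ, Atkin_add_two_zero, hypCoeff_succ, ← ratio_eq, pow_succ]
    linear_combination 2 * (2 * ((n + 1 : ℕ) : ℝ) + 1) / ((n + 1 : ℕ) + 2) * -atkinRatio n * ih

theorem atkin_generating_function_at_zero_general (t : ℝ) (ht : |t| ≤ 1) :
    HasSum (fun n : ℕ => catalan (n + 1) * Atkin (n + 1) 0 * (-t) ^ n)
      (-(5 / 12) * hyp (11 / 12) (17 / 12) 3 t) := by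
  refine ((hasSum_hyp (by norm_num) ht).mul_left (-(5 / 12))).congr_fun fun n => ?_
  rw [neg_pow, ← mul_assoc, ← mul_assoc, catalan_mul_Atkin_zero]

theorem atkin_generating_function_at_zero (t : ℝ) (ht : |t| < 1) :
    (∑' n : ℕ, ((Nat.choose (2*(n + 1)) (n + 1) : ℝ) / ((n + 1 : ℕ) + 1 : ℝ))
        * Atkin (n + 1) 0 * (-t)^n)
    = -(5/12) * hyp (11/12) (17/12) 3 t := by
  simpa only [cast_catalan_eq_choose_div] using
    (atkin_generating_function_at_zero_general t ht.le).tsum_eq
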